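/- If w_1 > w_2 > … > w_n > 0, then the generalized Gini index G_w is strictly increasing under Pigou–Dalton transfers: for every v ∈ ℝ^n with v_i < v_j and every ε ∈ (0, v_j − v_i), G_w(v + ε·1_i − ε·1_j) > G_w(v), where 1_i denotes the i-th canonical basis vector of ℝ^n. -/

import Mathlib

/-- The vector `v` rearranged in nondecreasing order. -/
noncomputable def sortedVec {n : ℕ} (v : Fin n → ℝ) : Fin n → ℝ := v ∘ Tuple.sort v

/-- Ordered weighted average: `OWA_w(v) = ∑ₖ w_k v↑_k`. -/
noncomputable def OWA {n : ℕ} (w v : Fin n → ℝ) : ℝ := ∑ k, w k * sortedVec v k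

/-- `Lorenz v k` is the k-th Lorenz component, the sum of the k smallest components of v. -/
noncomputable def Lorenz {n : ℕ} (v : Fin n → ℝ) (k : ℕ) : ℝ :=
  ∑ i : Fin n, if (i : ℕ) < k then sortedVec v i else 0

/-- `wprime w k = w_k - w_{k+1}` with the convention `w_{n+1} = 0` (0-indexed). -/
noncomputable def wprime {n : ℕ} (w : Fin n → ℝ) (k : Fin n) : ℝ :=
  w k - (if h : (k : ℕ) + 1 < n then w ⟨(k : ℕ) + 1, h⟩ else 0)

/-
Write `M = v j - v i`. The transfer of `ε` is a proper convex combination of `v` and of `v` with the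
entries `i` and `j` exchanged, the latter being the transfer of the whole gap `M`. By the
rearrangement inequality, `OWA w v` is the minimum of `⟨w ∘ σ, v⟩` over permutations `σ`. Take a
permutation `ω` of `w` with `OWA w u = ⟨ω, u⟩` for the transferred vector `u`. Both `⟨ω, v⟩` and
`⟨ω, v ∘ swap i j⟩` are at least `OWA w v`, and they differ by `(ω i - ω j) * M ≠ 0`, so `⟨ω, u⟩`
lies strictly between two distinct upper bounds of `OWA w v`.
-/

open Equiv

section PigouDaltonTransfer

/-- The vector obtained from `v` by a Pigou–Dalton transfer of the amount `ε` from component `j` to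
component `i`, i.e. `v + ε·1_i − ε·1_j`. Every amount `ε` is allowed, so that exchanging the two
components is itself a transfer, of the amount `v j - v i`. -/
def pigouDaltonTransfer {ι R : Type*} [DecidableEq ι] [AddGroup R] (v : ι → R) (i j : ι) (ε : R) :
    ι → R :=
  v + (Pi.single i ε - Pi.single j ε)

variable {ι R : Type*} [DecidableEq ι]

lemma pigouDaltonTransfer_apply [AddGroup R] (v : ι → R) (i j : ι) (ε : R) (t : ι) :
    pigouDaltonTransfer v i j ε t =
      v t + (if t = i then ε else 0) - (if t = j then ε else 0) := by
  simp only [pigouDaltonTransfer, Pi.add_apply, Pi.sub_apply, Pi.single_apply, add_sub_assoc]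

lemma pigouDaltonTransfer_sub_eq_comp_swap [AddCommGroup R] (v : ι → R) (i j : ι) :
    pigouDaltonTransfer v i j (v j - v i) = v ∘ swap i j := by
  ext t
  rw [pigouDaltonTransfer_apply, Function.comp_apply, swap_apply_def]
  split_ifs <;> simp_all

lemma dotProduct_pigouDaltonTransfer [Fintype ι] [NonUnitalRing R] (ω v : ι → R) (i j : ι)
    (ε : R) : ω ⬝ᵥ pigouDaltonTransfer v i j ε = ω ⬝ᵥ v + (ω i - ω j) * ε := by
  rw [pigouDaltonTransfer, dotProduct_add, dotProduct_sub, dotProduct_single, dotProduct_single,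
    sub_mul]

lemma dotProduct_comp_swap [Fintype ι] [NonUnitalRing R] (ω v : ι → R) (i j : ι) :
    ω ⬝ᵥ (v ∘ swap i j) = ω ⬝ᵥ v + (ω i - ω j) * (v j - v i) := by
  rw [← pigouDaltonTransfer_sub_eq_comp_swap, dotProduct_pigouDaltonTransfer]

lemma pigouDaltonTransfer_mem_openSegment [Field R] [LinearOrder R] [IsStrictOrderedRing R]
    {v : ι → R} {i j : ι} {ε : R} (hε₀ : 0 < ε) (hε₁ : ε < v j - v i) :
    pigouDaltonTransfer v i j ε ∈ openSegment R v (v ∘ swap i j) := by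
  have hgap : 0 < v j - v i := hε₀.trans hε₁
  have hcancel : ε / (v j - v i) * (v j - v i) = ε := div_mul_cancel₀ ε hgap.ne'
  rw [openSegment_eq_image', ← pigouDaltonTransfer_sub_eq_comp_swap]
  refine ⟨ε / (v j - v i), ⟨div_pos hε₀ hgap, (div_lt_one hgap).2 hε₁⟩, ?_⟩
  simp only [pigouDaltonTransfer, add_sub_cancel_left, smul_sub, ← Pi.single_smul', smul_eq_mul,
    hcancel]

end PigouDaltonTransfer

lemma lt_of_mem_openSegment {𝕜 : Type*} [Field 𝕜] [LinearOrder 𝕜] [IsStrictOrderedRing 𝕜]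
    {a x y z : 𝕜} (hx : a ≤ x) (hy : a ≤ y) (hxy : x ≠ y) (hz : z ∈ openSegment 𝕜 x y) :
    a < z := by
  rw [openSegment_eq_Ioo' hxy] at hz
  exact (le_min hx hy).trans_lt hz.1

lemma dotProduct_mem_openSegment {ι 𝕜 : Type*} [Fintype ι] [CommSemiring 𝕜] [PartialOrder 𝕜]
    (ω : ι → 𝕜) {x y z : ι → 𝕜} (hz : z ∈ openSegment 𝕜 x y) :
    ω ⬝ᵥ z ∈ openSegment 𝕜 (ω ⬝ᵥ x) (ω ⬝ᵥ y) := by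
  obtain ⟨a, b, ha, hb, hab, rfl⟩ := hz
  exact ⟨a, b, ha, hb, hab, by rw [dotProduct_add, dotProduct_smul, dotProduct_smul]⟩

section OWA

variable {n : ℕ} {w : Fin n → ℝ}

lemma OWA_eq_dotProduct (w v : Fin n → ℝ) : OWA w v = (w ∘ (Tuple.sort v).symm) ⬝ᵥ v :=
  (comp_equiv_symm_dotProduct w v (Tuple.sort v)).symm

lemma OWA_le_dotProduct (hw : Antitone w) (v : Fin n → ℝ) (σ : Perm (Fin n)) :
    OWA w v ≤ (w ∘ σ) ⬝ᵥ v := by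
  have hanti : Antivary w (sortedVec v) := hw.antivary (Tuple.monotone_sort v)
  calc OWA w v ≤ ∑ k, w ((σ * Tuple.sort v) k) * sortedVec v k :=
        hanti.sum_mul_le_sum_comp_perm_mul
    _ = (w ∘ σ) ⬝ᵥ v := sum_comp (Tuple.sort v) fun k ↦ w (σ k) * v k

lemma OWA_lt_OWA_of_mem_openSegment_comp_swap (hw : StrictAnti w) {u v : Fin n → ℝ} {i j : Fin n}
    (hij : v i ≠ v j) (hu : u ∈ openSegment ℝ v (v ∘ swap i j)) : OWA w v < OWA w u := by
  set τ := (Tuple.sort u).symm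
  have hv : OWA w v ≤ (w ∘ τ) ⬝ᵥ v := OWA_le_dotProduct hw.antitone v τ
  have hswap : OWA w v ≤ (w ∘ τ) ⬝ᵥ (v ∘ swap i j) := by
    rw [← comp_equiv_symm_dotProduct]
    exact OWA_le_dotProduct hw.antitone v (τ * swap i j)
  have hweights : (w ∘ τ) i ≠ (w ∘ τ) j :=
    (hw.injective.comp τ.injective).ne (ne_of_apply_ne v hij)
  have hne : (w ∘ τ) ⬝ᵥ v ≠ (w ∘ τ) ⬝ᵥ (v ∘ swap i j) := by
    rw [dotProduct_comp_swap, ne_eq, left_eq_add]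
    exact mul_ne_zero (sub_ne_zero.2 hweights) (sub_ne_zero.2 hij.symm)
  rw [OWA_eq_dotProduct w u]
  exact lt_of_mem_openSegment hv hswap hne (dotProduct_mem_openSegment (w ∘ τ) hu)

theorem stmt4_general (hw : StrictAnti w) {v : Fin n → ℝ} {i j : Fin n} {ε : ℝ}
    (hε₀ : 0 < ε) (hε₁ : ε < v j - v i) : OWA w v < OWA w (pigouDaltonTransfer v i j ε) :=
  OWA_lt_OWA_of_mem_openSegment_comp_swap hw (sub_pos.1 (hε₀.trans hε₁)).ne
    (pigouDaltonTransfer_mem_openSegment hε₀ hε₁)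

end OWA

/-- for strictly decreasing positive weights, the generalized Gini index
`G_w = OWA_w` strictly increases under any Pigou–Dalton transfer. -/
theorem stmt4 {n : ℕ} (w : Fin n → ℝ) (hw : StrictAnti w) (hwpos : ∀ k, 0 < w k)
    (v : Fin n → ℝ) (i j : Fin n) (hij : v i < v j)
    (ε : ℝ) (hε0 : 0 < ε) (hε1 : ε < v j - v i) :
    OWA w v < OWA w (fun t => v t + (if t = i then ε else 0) - (if t = j then ε else 0)) := by
  simpa only [← pigouDaltonTransfer_apply] using stmt4_general hw hε0 hε1
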